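/- arXiv:1510.00354 — 6 statements merged into one kernel-verified Lean document; each statement's English description precedes it below -/
import Mathlib

section
/- Let k ≥ 3 and i be integers with 1 ≤ i < k, and let t ∈ [0,1] be a real number. Then there exists a sequence (f_v)_{v ∈ ℕ}, where f_v is a k-uniform hypergraph property on v vertices, together with constants C, c', C' > 0 and v₀ ∈ ℕ, such that for all v ≥ v₀: s⁰(f_v) ≤ C · v^{i(1−t)} and c' · v^{k−i(1−t)} ≤ s¹(f_v) ≤ C' · v^{k−i(1−t)} (so s(f_v) = max{O(v^{i(1−t)}), Θ(v^{k−i(1−t)})}). -/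
open Finset

/-- The coordinate set: `k`-element subsets of `Fin v`. -/
abbrev KSet (v k : ℕ) : Type := {S : Finset (Fin v) // S.card = k}

/-- A `k`-uniform hypergraph on `Fin v`: a Boolean function on `k`-sets. -/
abbrev HGraph (v k : ℕ) : Type := KSet v k → Bool

/-- Sensitivity of `f` at input `x`: the number of coordinates whose flip changes `f`. -/
def localSens {I : Type} [Fintype I] [DecidableEq I]
    (f : (I → Bool) → Bool) (x : I → Bool) : ℕ :=
  (Finset.univ.filter fun i => f (Function.update x i (!x i)) ≠ f x).card

/-- Sensitivity of `f`: maximum of `localSens f x` over all inputs `x`. -/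
def sens {I : Type} [Fintype I] [DecidableEq I] (f : (I → Bool) → Bool) : ℕ :=
  Finset.univ.sup (localSens f)

/-- `sensOn b f` is `s^b(f)`: max sensitivity over inputs with `f x = b`. -/
def sensOn {I : Type} [Fintype I] [DecidableEq I] (b : Bool) (f : (I → Bool) → Bool) : ℕ :=
  (Finset.univ.filter fun x => f x = b).sup (localSens f)

/-- Flip all the coordinates of `x` in the block `B`. -/
def flipBlock {I : Type} [DecidableEq I] (x : I → Bool) (B : Finset I) : I → Bool :=
  fun i => if i ∈ B then !x i else x i

/-- Block sensitivity of `f` at `x`: maximum number of pairwise disjoint sensitive blocks. -/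
noncomputable def localBlockSens {I : Type} [Fintype I] [DecidableEq I]
    (f : (I → Bool) → Bool) (x : I → Bool) : ℕ :=
  sSup {n : ℕ | ∃ B : Fin n → Finset I,
    (∀ j, f (flipBlock x (B j)) ≠ f x) ∧
    ∀ j j', j ≠ j' → Disjoint (B j) (B j')}

/-- Block sensitivity of `f`. -/
noncomputable def blockSens {I : Type} [Fintype I] [DecidableEq I]
    (f : (I → Bool) → Bool) : ℕ :=
  Finset.univ.sup (localBlockSens f)

/-- Image of a `k`-set under a permutation of the vertices. -/
def permKSet {v k : ℕ} (σ : Equiv.Perm (Fin v)) (S : KSet v k) : KSet v k :=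
  ⟨S.1.map σ.toEmbedding, by rw [Finset.card_map]; exact S.2⟩

/-- A `k`-uniform hypergraph property: invariance under all vertex permutations,
where `(σ • G) S = G (σ⁻¹ S)`. -/
def IsHypergraphProperty {v k : ℕ} (f : HGraph v k → Bool) : Prop :=
  ∀ (σ : Equiv.Perm (Fin v)) (G : HGraph v k),
    f (fun S => G (permKSet σ⁻¹ S)) = f G

/-!
The property "`G` has an isolated clique on `m` vertices" works, where `m` is of order `v ^ t`, and
isolated means that no edge other than those of the clique meets it in `i` or more vertices.

Isolation makes cliques rigid: two isolated cliques of the same size sharing `i` vertices coincide,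
even in hypergraphs that differ in two edges. So if `G` lacks the property, distinct
sensitive edges create cliques pairwise sharing fewer than `i` vertices, and no `i`-set lies in two
of them; there are at most `choose v i / choose m i ≈ v ^ (i * (1 - t))`. If `G` has the property, a
clique in it is certified by the `k`-sets meeting it in at least `i` vertices, about
`m ^ i * v ^ (k - i) ≈ v ^ (k - i * (1 - t))` of them, and all of these are sensitive when `G` has
no other edges.
-/

section Sensitivity

variable {I : Type} [Fintype I] [DecidableEq I] {f : (I → Bool) → Bool} {x : I → Bool} {b : Bool}

theorem sensOn_le_iff {n : ℕ} : sensOn b f ≤ n ↔ ∀ x, f x = b → localSens f x ≤ n := by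
  simp [sensOn, Finset.sup_le_iff]

theorem localSens_le_sensOn (hx : f x = b) : localSens f x ≤ sensOn b f :=
  sensOn_le_iff.1 le_rfl x hx

theorem localSens_le_card_of_certificate {C : Finset I}
    (hC : ∀ y, (∀ e ∈ C, y e = x e) → f y = f x) : localSens f x ≤ #C := by
  refine card_le_card fun e he => by_contra fun heC => (mem_filter.1 he).2 (hC _ fun d hd => ?_)
  exact Function.update_of_ne (ne_of_mem_of_not_mem hd heC) _ _

end Sensitivity

section Counting

open scoped FinsetFamily

variable {α ι : Type*} [DecidableEq α] {k i m : ℕ} {s U U' : Finset α}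

theorem card_mul_choose_le_of_card_inter_lt {J : Finset ι} {F : ι → Finset α}
    (hFs : ∀ a ∈ J, F a ⊆ s) (hFm : ∀ a ∈ J, #(F a) = m)
    (hF : (J : Set ι).Pairwise fun a b => #(F a ∩ F b) < i) :
    #J * m.choose i ≤ (#s).choose i := by
  have hdisj : (J : Set ι).PairwiseDisjoint fun a => (F a).powersetCard i := by
    refine fun a ha b hb hab => disjoint_left.2 fun W hWa hWb => ?_
    rw [mem_powersetCard] at hWa hWb
    have hWi : #W ≤ #(F a ∩ F b) := card_le_card (subset_inter hWa.1 hWb.1)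
    exact (hF ha hb hab).not_ge (hWa.2 ▸ hWi)
  calc #J * m.choose i = ∑ a ∈ J, #((F a).powersetCard i) := by
        rw [sum_const_nat fun a ha => by rw [card_powersetCard, hFm a ha]]
    _ = #(J.biUnion fun a => (F a).powersetCard i) := (card_biUnion hdisj).symm
    _ ≤ #(s.powersetCard i) :=
        card_le_card (biUnion_subset.2 fun a ha => powersetCard_mono (hFs a ha))
    _ = (#s).choose i := card_powersetCard i s

theorem card_filter_le_card_inter_le :
    #{e ∈ s.powersetCard k | i ≤ #(e ∩ U)} ≤ (#U).choose i * (#s).choose (k - i) := by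
  have hsub : {e ∈ s.powersetCard k | i ≤ #(e ∩ U)} ⊆
      U.powersetCard i ⊻ s.powersetCard (k - i) := by
    intro e he
    simp only [mem_filter, mem_powersetCard] at he
    obtain ⟨⟨hes, hek⟩, hei⟩ := he
    obtain ⟨W, hW, hWi⟩ := exists_subset_card_eq hei
    have hWe : W ⊆ e := hW.trans inter_subset_left
    refine mem_sups.2 ⟨W, mem_powersetCard.2 ⟨hW.trans inter_subset_right, hWi⟩,
      e \ W, mem_powersetCard.2 ⟨sdiff_subset.trans hes, ?_⟩, union_sdiff_of_subset hWe⟩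
    rw [card_sdiff_of_subset hWe, hek, hWi]
  simpa only [card_powersetCard] using (card_le_card hsub).trans (card_sups_le _ _)

theorem card_sups_powersetCard_sdiff {r : ℕ} :
    #(U.powersetCard i ⊻ (s \ U).powersetCard r) = (#U).choose i * (#(s \ U)).choose r := by
  rw [(card_sups_iff _ _).2, card_powersetCard, card_powersetCard]
  rintro ⟨A, B⟩ hAB ⟨A', B'⟩ hAB' heq
  simp only [Set.mem_prod, mem_coe, mem_powersetCard, sup_eq_union, subset_sdiff] at hAB hAB' heq
  have hsplit : ∀ {A B : Finset α}, A ⊆ U → Disjoint B U →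
      (A ∪ B) ∩ U = A ∧ (A ∪ B) \ U = B := by
    intro A B hA hB
    rw [union_inter_distrib_right, union_sdiff_distrib, inter_eq_left.2 hA,
      disjoint_iff_inter_eq_empty.1 hB, sdiff_eq_empty_iff_subset.2 hA,
      sdiff_eq_self_of_disjoint hB]
    simp only [union_empty, empty_union, and_self]
  obtain ⟨hA, hB⟩ := hsplit hAB.1.1 hAB.2.1.2
  obtain ⟨hA', hB'⟩ := hsplit hAB'.1.1 hAB'.2.1.2
  exact Prod.ext (hA.symm.trans (heq ▸ hA')) (hB.symm.trans (heq ▸ hB'))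

theorem le_card_filter_le_card_inter (hik : i ≤ k) (hU : U ⊆ s) :
    (#U).choose i * (#s - #U).choose (k - i) ≤ #{e ∈ s.powersetCard k | i ≤ #(e ∩ U)} := by
  rw [← card_sdiff_of_subset hU, ← card_sups_powersetCard_sdiff]
  refine card_le_card (sups_subset_iff.2 fun A hA B hB => ?_)
  rw [mem_powersetCard] at hA hB
  have hAB : Disjoint A B := disjoint_sdiff.mono hA.1 hB.1
  simp only [sup_eq_union, mem_filter, mem_powersetCard]
  refine ⟨⟨union_subset (hA.1.trans hU) (hB.1.trans sdiff_subset), ?_⟩, ?_⟩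
  · rw [card_union_of_disjoint hAB, hA.2, hB.2, Nat.add_sub_cancel' hik]
  · exact hA.2 ▸ card_le_card (subset_inter subset_union_left hA.1)

theorem exists_mem_subset_card_eq_not_subset {y : α} (hi : 1 ≤ i) (hik : i < k) (hkU : k ≤ #U)
    (hy : y ∈ U) (hUU' : ¬ U ⊆ U') (hov : i ≤ #(U ∩ U')) :
    ∃ d ⊆ U, #d = k ∧ y ∈ d ∧ i ≤ #(d ∩ U') ∧ ¬ d ⊆ U' := by
  obtain ⟨x, W, hxU, hxU', hW, hWi, hyxW⟩ : ∃ x W,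
      x ∈ U ∧ x ∉ U' ∧ W ⊆ U ∩ U' ∧ #W = i ∧ y ∈ insert x W := by
    by_cases hyU' : y ∈ U'
    · obtain ⟨x, hxU, hxU'⟩ := not_subset.1 hUU'
      obtain ⟨W, hyW, hW, hWi⟩ := exists_subsuperset_card_eq
        (singleton_subset_iff.2 (mem_inter.2 ⟨hy, hyU'⟩)) (by rwa [card_singleton]) hov
      exact ⟨x, W, hxU, hxU', hW, hWi, mem_insert_of_mem (singleton_subset_iff.1 hyW)⟩
    · obtain ⟨W, hW, hWi⟩ := exists_subset_card_eq hov
      exact ⟨y, W, hy, hyU', hW, hWi, mem_insert_self y W⟩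
  obtain ⟨d, hxWd, hdU, hdk⟩ := exists_subsuperset_card_eq
    (insert_subset hxU (hW.trans inter_subset_left)) ((card_insert_le x W).trans (by omega)) hkU
  obtain ⟨hxd, hWd⟩ := insert_subset_iff.1 hxWd
  exact ⟨d, hdU, hdk, hxWd hyxW,
    hWi ▸ card_le_card (subset_inter hWd (hW.trans inter_subset_right)), fun h => hxU' (h hxd)⟩

end Counting

section IsolatedClique

variable {v k i m : ℕ} {G G' : HGraph v k} {U U' : Finset (Fin v)} {e e' : KSet v k}

/-- `U` is a clique of `G`, isolated in the sense that every edge of `G` meeting `U` in at least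
`i` vertices lies in `U`. For `i ≤ k` the one equivalence expresses both conditions. -/
def IsIsolatedClique (i : ℕ) (G : HGraph v k) (U : Finset (Fin v)) : Prop :=
  ∀ e : KSet v k, i ≤ #(e.1 ∩ U) → (G e = true ↔ e.1 ⊆ U)

open Classical in
/-- The hypergraph property of containing an isolated clique on `m` vertices, which witnesses the
theorem for `m` of order `v ^ t`. -/
noncomputable def hasIsolatedClique (i m : ℕ) (G : HGraph v k) : Bool :=
  decide (∃ U : Finset (Fin v), #U = m ∧ IsIsolatedClique i G U)

/-- The `k`-sets on whose membership in the hypergraph it depends whether `U` is an isolated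
clique. -/
def certificateKSets (k i : ℕ) (U : Finset (Fin v)) : Finset (KSet v k) :=
  {e | i ≤ #(e.1 ∩ U)}

/-- The hypergraph whose edges are the `k`-subsets of `U`. -/
def cliqueHGraph (k : ℕ) (U : Finset (Fin v)) : HGraph v k := fun e => decide (e.1 ⊆ U)

theorem mem_certificateKSets : e ∈ certificateKSets k i U ↔ i ≤ #(e.1 ∩ U) :=
  mem_filter_univ e

theorem card_certificateKSets :
    #(certificateKSets k i U) = #{e ∈ univ.powersetCard k | i ≤ #(e ∩ U)} := by
  rw [← card_map (Function.Embedding.subtype _)]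
  congr 1
  ext e
  simp [certificateKSets, and_comm]

theorem card_certificateKSets_le :
    #(certificateKSets k i U) ≤ (#U).choose i * v.choose (k - i) := by
  simpa [card_certificateKSets] using card_filter_le_card_inter_le (s := univ) (U := U)

theorem le_card_certificateKSets (hik : i ≤ k) :
    (#U).choose i * (v - #U).choose (k - i) ≤ #(certificateKSets k i U) := by
  simpa [card_certificateKSets] using le_card_filter_le_card_inter hik (subset_univ U)

theorem hasIsolatedClique_eq_true :
    hasIsolatedClique i m G = true ↔ ∃ U : Finset (Fin v), #U = m ∧ IsIsolatedClique i G U := by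
  simp [hasIsolatedClique]

theorem isIsolatedClique_cliqueHGraph : IsIsolatedClique i (cliqueHGraph k U) U :=
  fun _ _ => decide_eq_true_iff

theorem permKSet_inv_permKSet (σ : Equiv.Perm (Fin v)) (e : KSet v k) :
    permKSet σ⁻¹ (permKSet σ e) = e := by
  ext
  simp [permKSet, Equiv.Perm.inv_def]

theorem isIsolatedClique_map_iff (σ : Equiv.Perm (Fin v)) :
    IsIsolatedClique i (fun e => G (permKSet σ⁻¹ e)) (U.map σ.toEmbedding) ↔
      IsIsolatedClique i G U := by
  have hsurj : Function.Surjective (permKSet σ : KSet v k → KSet v k) := fun e =>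
    ⟨permKSet σ⁻¹ e, by simpa only [inv_inv] using permKSet_inv_permKSet σ⁻¹ e⟩
  unfold IsIsolatedClique
  rw [hsurj.forall]
  simp only [permKSet_inv_permKSet]
  simp only [permKSet, ← map_inter, card_map, map_subset_map]

theorem isHypergraphProperty_hasIsolatedClique :
    IsHypergraphProperty (hasIsolatedClique i m : HGraph v k → Bool) := by
  intro σ G
  rw [Bool.eq_iff_iff, hasIsolatedClique_eq_true, hasIsolatedClique_eq_true,
    σ.finsetCongr.surjective.exists]
  simp [isIsolatedClique_map_iff]

namespace IsIsolatedClique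

theorem congr (hG : IsIsolatedClique i G U) (h : ∀ e ∈ certificateKSets k i U, G' e = G e) :
    IsIsolatedClique i G' U := fun e he => by
  rw [h e (mem_certificateKSets.2 he)]
  exact hG e he

theorem apply_of_subset (hG : IsIsolatedClique i G U) (hik : i ≤ k) (he : e.1 ⊆ U) :
    G e = true :=
  (hG e (by rwa [inter_eq_left.2 he, e.2])).2 he

theorem eq_of_agree_off_pair (hi : 1 ≤ i) (hik : i < k) (hm : 2 * k < m)
    (hagree : ∀ d, d ≠ e → d ≠ e' → G d = G' d) (hU : #U = m) (hU' : #U' = m)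
    (hG : IsIsolatedClique i G U) (hG' : IsIsolatedClique i G' U') (hov : i ≤ #(U ∩ U')) :
    U = U' := by
  refine eq_of_subset_of_card_le (by_contra fun hUU' => ?_) (hU'.trans hU.symm).le
  -- `e` and `e'` are too small to cover `U`, so they can be avoided by going through `y`.
  obtain ⟨y, hyU, hy⟩ : ∃ y ∈ U, y ∉ e.1 ∪ e'.1 := by
    refine exists_mem_notMem_of_card_lt_card ((card_union_le _ _).trans_lt ?_)
    rw [e.2, e'.2]
    omega
  obtain ⟨d, hdU, hdk, hyd, hdi, hdU'⟩ :=
    exists_mem_subset_card_eq_not_subset hi hik (by omega) hyU hUU' hov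
  have hde : (⟨d, hdk⟩ : KSet v k) ≠ e := by
    rintro rfl
    exact hy (mem_union_left _ hyd)
  have hde' : (⟨d, hdk⟩ : KSet v k) ≠ e' := by
    rintro rfl
    exact hy (mem_union_right _ hyd)
  have hGd : G ⟨d, hdk⟩ = true := hG.apply_of_subset hik.le hdU
  exact hdU' ((hG' ⟨d, hdk⟩ hdi).1 (hagree _ hde hde' ▸ hGd))

theorem of_update_of_update {b b' : Bool} (hne : e ≠ e')
    (h : IsIsolatedClique i (Function.update G e b) U)
    (h' : IsIsolatedClique i (Function.update G e' b') U) : IsIsolatedClique i G U := by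
  intro d hd
  by_cases hde : d = e
  · simpa [hde ▸ hne] using h' d hd
  · simpa [hde] using h d hd

end IsIsolatedClique

theorem sensOn_false_mul_choose_le (hi : 1 ≤ i) (hik : i < k) (hm : 2 * k < m) :
    sensOn false (hasIsolatedClique i m : HGraph v k → Bool) * m.choose i ≤ v.choose i := by
  have hpos : 0 < m.choose i := Nat.choose_pos (by omega)
  rw [← Nat.le_div_iff_mul_le hpos, sensOn_le_iff]
  intro G hG
  rw [Nat.le_div_iff_mul_le hpos]
  let S : Finset (KSet v k) := {e | hasIsolatedClique i m (Function.update G e (!G e)) ≠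
    hasIsolatedClique i m G}
  have hclique : ∀ e ∈ S, ∃ U : Finset (Fin v),
      #U = m ∧ IsIsolatedClique i (Function.update G e (!G e)) U := by
    intro e he
    rwa [mem_filter_univ, hG, ne_eq, Bool.not_eq_false, hasIsolatedClique_eq_true] at he
  choose! U hUm hU using hclique
  have hoverlap : ∀ e ∈ S, ∀ e' ∈ S, e ≠ e' → #(U e ∩ U e') < i := by
    intro e he e' he' hne
    by_contra! hov
    have hUU' : U e = U e' := (hU e he).eq_of_agree_off_pair (e := e) (e' := e') hi hik hm
      (fun d hde hde' => by simp [hde, hde']) (hUm e he) (hUm e' he') (hU e' he') hov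
    have hGU : IsIsolatedClique i G (U e) :=
      (hU e he).of_update_of_update hne (hUU' ▸ hU e' he')
    exact Bool.false_ne_true (hG ▸ hasIsolatedClique_eq_true.2 ⟨U e, hUm e he, hGU⟩)
  calc localSens (hasIsolatedClique i m) G * m.choose i = #S * m.choose i := rfl
    _ ≤ (#(univ : Finset (Fin v))).choose i :=
        card_mul_choose_le_of_card_inter_lt (fun e _ => subset_univ (U e)) hUm hoverlap
    _ = v.choose i := by rw [card_univ, Fintype.card_fin]

theorem sensOn_true_le :
    sensOn true (hasIsolatedClique i m : HGraph v k → Bool) ≤ m.choose i * v.choose (k - i) := by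
  refine sensOn_le_iff.2 fun G hG => ?_
  obtain ⟨U, rfl, hU⟩ := hasIsolatedClique_eq_true.1 hG
  refine (localSens_le_card_of_certificate fun G' hG' => ?_).trans card_certificateKSets_le
  rw [hG]
  exact hasIsolatedClique_eq_true.2 ⟨U, rfl, hU.congr hG'⟩

theorem hasIsolatedClique_update_cliqueHGraph (hi : 1 ≤ i) (hik : i < k) (hm : 2 * k < m)
    (hU : #U = m) (he : e ∈ certificateKSets k i U) :
    hasIsolatedClique i m (Function.update (cliqueHGraph k U) e (!cliqueHGraph k U e)) = false := by
  rw [← Bool.not_eq_true, hasIsolatedClique_eq_true]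
  rintro ⟨U', hU', hGU'⟩
  obtain ⟨y, hyU', hye⟩ : ∃ y ∈ U', y ∉ e.1 :=
    exists_mem_notMem_of_card_lt_card (by rw [e.2]; omega)
  obtain ⟨d, hyd, hdU', hdk⟩ := exists_subsuperset_card_eq (singleton_subset_iff.2 hyU')
    (show #{y} ≤ k by rw [card_singleton]; omega) (by omega)
  have hde : (⟨d, hdk⟩ : KSet v k) ≠ e := by
    rintro rfl
    exact hye (singleton_subset_iff.1 hyd)
  have hdU : d ⊆ U := by
    have hd := hGU'.apply_of_subset (e := ⟨d, hdk⟩) hik.le hdU'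
    rw [Function.update_of_ne hde] at hd
    exact of_decide_eq_true hd
  have hov : i ≤ #(U' ∩ U) := (hdk ▸ hik.le).trans (card_le_card (subset_inter hdU' hdU))
  obtain rfl : U' = U := hGU'.eq_of_agree_off_pair (e := e) (e' := e) hi hik hm
    (fun d hd _ => Function.update_of_ne hd _ _) hU' hU isIsolatedClique_cliqueHGraph hov
  have hflip := hGU' e (mem_certificateKSets.1 he)
  rw [Function.update_self] at hflip
  simp [cliqueHGraph] at hflip

theorem le_sensOn_true (hi : 1 ≤ i) (hik : i < k) (hm : 2 * k < m) (hmv : m ≤ v) :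
    m.choose i * (v - m).choose (k - i) ≤
      sensOn true (hasIsolatedClique i m : HGraph v k → Bool) := by
  obtain ⟨U, -, hU⟩ := exists_subset_card_eq (show m ≤ #(univ : Finset (Fin v)) by simpa using hmv)
  have htrue : hasIsolatedClique i m (cliqueHGraph k U) = true :=
    hasIsolatedClique_eq_true.2 ⟨U, hU, isIsolatedClique_cliqueHGraph⟩
  calc m.choose i * (v - m).choose (k - i) ≤ #(certificateKSets k i U) :=
        hU ▸ le_card_certificateKSets hik.le
    _ ≤ localSens (hasIsolatedClique i m) (cliqueHGraph k U) := card_le_card fun e he => by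
        rw [mem_filter_univ, hasIsolatedClique_update_cliqueHGraph hi hik hm hU he, htrue]
        exact Bool.false_ne_true
    _ ≤ sensOn true (hasIsolatedClique i m) := localSens_le_sensOn htrue

end IsolatedClique

section Asymptotics

variable {v k i : ℕ} {t : ℝ}

theorem pow_le_factorial_mul_choose {y : ℝ} {n r : ℕ} (hy : 0 ≤ y) (hyn : y ≤ (n + 1 - r : ℕ)) :
    y ^ r ≤ r.factorial * n.choose r := by
  rw [← div_le_iff₀' (by positivity)]
  exact le_trans (by gcongr) (Nat.pow_le_choose r n)

theorem rpow_natCast_mul_one_sub {x : ℝ} (hx : 0 < x) (i : ℕ) (t : ℝ) :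
    x ^ ((i : ℝ) * (1 - t)) = (x / x ^ t) ^ i := by
  rw [mul_comm, Real.rpow_mul_natCast hx.le, Real.rpow_sub hx, Real.rpow_one]

theorem rpow_natCast_sub_mul_one_sub {x : ℝ} (hx : 0 < x) (hik : i ≤ k) (t : ℝ) :
    x ^ ((k : ℝ) - (i : ℝ) * (1 - t)) = (x ^ t) ^ i * x ^ (k - i) := by
  rw [← Real.rpow_natCast x (k - i), ← Real.rpow_mul_natCast hx.le, ← Real.rpow_add hx,
    Nat.cast_sub hik]
  congr 1
  ring

/-- A clique size of order `v ^ t`. The factor `1 / 4` keeps it well below `v` when `t = 1`, and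
the summand `2 * k + 1` makes cliques too large to be covered by two `k`-sets. -/
noncomputable def cliqueSize (k : ℕ) (t : ℝ) (v : ℕ) : ℕ := ⌈(v : ℝ) ^ t / 4⌉₊ + (2 * k + 1)

theorem two_mul_lt_cliqueSize : 2 * k < cliqueSize k t v := by
  unfold cliqueSize
  omega

theorem rpow_div_four_add_le_cliqueSize : (v : ℝ) ^ t / 4 + (2 * k + 1) ≤ cliqueSize k t v := by
  unfold cliqueSize
  push_cast
  gcongr
  exact Nat.le_ceil _

theorem cliqueSize_le : (cliqueSize k t v : ℝ) ≤ (v : ℝ) ^ t / 4 + (2 * k + 2) := by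
  unfold cliqueSize
  push_cast
  linarith [Nat.ceil_lt_add_one (show 0 ≤ (v : ℝ) ^ t / 4 by positivity)]

theorem rpow_div_four_pow_le_choose_cliqueSize (hik : i ≤ k) :
    ((v : ℝ) ^ t / 4) ^ i ≤ i.factorial * (cliqueSize k t v).choose i := by
  refine pow_le_factorial_mul_choose (by positivity) ?_
  have hm := rpow_div_four_add_le_cliqueSize (k := k) (t := t) (v := v)
  have hik' : (i : ℝ) ≤ k := mod_cast hik
  rw [Nat.cast_sub (by have := two_mul_lt_cliqueSize (k := k) (t := t) (v := v); omega)]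
  push_cast
  linarith

theorem cliqueSize_le_half (ht : t ≤ 1) (hv : 8 * k + 8 ≤ v) : 2 * cliqueSize k t v ≤ v := by
  have hv' : (8 * k + 8 : ℝ) ≤ v := mod_cast hv
  have hvt : (v : ℝ) ^ t ≤ v := by
    simpa using Real.rpow_le_rpow_of_exponent_le (by linarith) ht
  have : (2 * cliqueSize k t v : ℝ) ≤ v := by
    linarith [cliqueSize_le (k := k) (t := t) (v := v)]
  exact_mod_cast this

theorem sensOn_false_cliqueSize_le (hi : 1 ≤ i) (hik : i < k) (hv : 0 < v) :
    (sensOn false (hasIsolatedClique i (cliqueSize k t v) : HGraph v k → Bool) : ℝ) ≤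
      4 ^ i * (v : ℝ) ^ ((i : ℝ) * (1 - t)) := by
  set m := cliqueSize k t v
  set N := sensOn false (hasIsolatedClique i m : HGraph v k → Bool)
  have hv' : (0 : ℝ) < v := mod_cast hv
  have hN : (N : ℝ) * m.choose i ≤ v.choose i := by
    exact_mod_cast sensOn_false_mul_choose_le hi hik two_mul_lt_cliqueSize
  have hNv : N * ((v : ℝ) ^ t / 4) ^ i ≤ (v : ℝ) ^ i :=
    calc N * ((v : ℝ) ^ t / 4) ^ i ≤ N * (i.factorial * m.choose i) := by
          gcongr
          exact rpow_div_four_pow_le_choose_cliqueSize hik.le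
      _ = N * m.choose i * i.factorial := by ring
      _ ≤ v.choose i * i.factorial := by gcongr
      _ ≤ (v : ℝ) ^ i := (le_div_iff₀ (by positivity)).1 (Nat.choose_le_pow_div i v)
  rw [rpow_natCast_mul_one_sub hv', ← mul_pow]
  calc (N : ℝ) ≤ (v : ℝ) ^ i / ((v : ℝ) ^ t / 4) ^ i := (le_div_iff₀ (by positivity)).2 hNv
    _ = (4 * (v / (v : ℝ) ^ t)) ^ i := by
      rw [← div_pow]
      congr 1
      field_simp

theorem sensOn_true_cliqueSize_le (hik : i ≤ k) (ht : 0 ≤ t) (hv : 0 < v) :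
    (sensOn true (hasIsolatedClique i (cliqueSize k t v) : HGraph v k → Bool) : ℝ) ≤
      (2 * k + 3) ^ i * (v : ℝ) ^ ((k : ℝ) - (i : ℝ) * (1 - t)) := by
  set m := cliqueSize k t v
  have hvt : 1 ≤ (v : ℝ) ^ t := Real.one_le_rpow (mod_cast hv) ht
  have hm : (m : ℝ) ≤ (2 * k + 3) * (v : ℝ) ^ t := by
    nlinarith [cliqueSize_le (k := k) (t := t) (v := v), k.cast_nonneg (α := ℝ)]
  calc (sensOn true (hasIsolatedClique i m : HGraph v k → Bool) : ℝ)
      ≤ m.choose i * v.choose (k - i) := mod_cast sensOn_true_le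
    _ ≤ (m : ℝ) ^ i * (v : ℝ) ^ (k - i) := by
        gcongr <;> exact_mod_cast Nat.choose_le_pow _ _
    _ ≤ ((2 * k + 3) * (v : ℝ) ^ t) ^ i * (v : ℝ) ^ (k - i) := by gcongr
    _ = (2 * k + 3) ^ i * (v : ℝ) ^ ((k : ℝ) - (i : ℝ) * (1 - t)) := by
        rw [rpow_natCast_sub_mul_one_sub (mod_cast hv) hik, mul_pow, mul_assoc]

theorem div_four_pow_le_choose_sub {m r : ℕ} (hm : 2 * m ≤ v) (hr : 4 * r ≤ v) :
    ((v : ℝ) / 4) ^ r ≤ r.factorial * (v - m).choose r := by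
  refine pow_le_factorial_mul_choose (by positivity) ?_
  rw [div_le_iff₀ (by norm_num)]
  exact_mod_cast (by omega : v ≤ (v - m + 1 - r) * 4)

theorem le_sensOn_true_cliqueSize (hi : 1 ≤ i) (hik : i < k) (ht : t ≤ 1) (hv : 8 * k + 8 ≤ v) :
    ((i.factorial * (k - i).factorial * 4 ^ k : ℝ)⁻¹) * (v : ℝ) ^ ((k : ℝ) - (i : ℝ) * (1 - t)) ≤
      sensOn true (hasIsolatedClique i (cliqueSize k t v) : HGraph v k → Bool) := by
  set m := cliqueSize k t v
  have hmv : 2 * m ≤ v := cliqueSize_le_half ht hv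
  have hv' : (0 : ℝ) < v := by norm_cast; omega
  rw [inv_mul_le_iff₀ (by positivity), rpow_natCast_sub_mul_one_sub hv' hik.le]
  calc ((v : ℝ) ^ t) ^ i * (v : ℝ) ^ (k - i)
      = 4 ^ k * (((v : ℝ) ^ t / 4) ^ i * ((v : ℝ) / 4) ^ (k - i)) := by
        rw [← pow_mul_pow_sub 4 hik.le, div_pow, div_pow]
        field_simp
    _ ≤ 4 ^ k * (i.factorial * m.choose i * ((k - i).factorial * (v - m).choose (k - i))) := by
        gcongr
        · exact rpow_div_four_pow_le_choose_cliqueSize hik.le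
        · exact div_four_pow_le_choose_sub hmv (by omega)
    _ = i.factorial * (k - i).factorial * 4 ^ k *
          ((m.choose i * (v - m).choose (k - i) : ℕ) : ℝ) := by
        push_cast
        ring
    _ ≤ _ := by
        gcongr
        exact le_sensOn_true hi hik two_mul_lt_cliqueSize (by omega)

end Asymptotics

theorem stmt0_general (k i : ℕ) (hi1 : 1 ≤ i) (hik : i < k)
    (t : ℝ) (ht0 : 0 ≤ t) (ht1 : t ≤ 1) :
    ∃ f : (v : ℕ) → (HGraph v k → Bool),
      (∀ v, IsHypergraphProperty (f v)) ∧
      ∃ C c' C' : ℝ, 0 < C ∧ 0 < c' ∧ 0 < C' ∧ ∃ v₀ : ℕ, ∀ v : ℕ, v₀ ≤ v →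
        (sensOn false (f v) : ℝ) ≤ C * (v : ℝ) ^ ((i : ℝ) * (1 - t)) ∧
        c' * (v : ℝ) ^ ((k : ℝ) - (i : ℝ) * (1 - t)) ≤ (sensOn true (f v) : ℝ) ∧
        (sensOn true (f v) : ℝ) ≤ C' * (v : ℝ) ^ ((k : ℝ) - (i : ℝ) * (1 - t)) := by
  refine ⟨fun v => hasIsolatedClique i (cliqueSize k t v),
    fun v => isHypergraphProperty_hasIsolatedClique,
    4 ^ i, (i.factorial * (k - i).factorial * 4 ^ k : ℝ)⁻¹, (2 * k + 3) ^ i,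
    by positivity, by positivity, by positivity, 8 * k + 8, fun v hv => ⟨?_, ?_, ?_⟩⟩
  · exact sensOn_false_cliqueSize_le hi1 hik (by omega)
  · exact le_sensOn_true_cliqueSize hi1 hik ht1 hv
  · exact sensOn_true_cliqueSize_le hik.le ht0 (by omega)

theorem stmt0 (k i : ℕ) (hk : 3 ≤ k) (hi1 : 1 ≤ i) (hik : i < k)
    (t : ℝ) (ht0 : 0 ≤ t) (ht1 : t ≤ 1) :
    ∃ f : (v : ℕ) → (HGraph v k → Bool),
      (∀ v, IsHypergraphProperty (f v)) ∧
      ∃ C c' C' : ℝ, 0 < C ∧ 0 < c' ∧ 0 < C' ∧ ∃ v₀ : ℕ, ∀ v : ℕ, v₀ ≤ v →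
        (sensOn false (f v) : ℝ) ≤ C * (v : ℝ) ^ ((i : ℝ) * (1 - t)) ∧
        c' * (v : ℝ) ^ ((k : ℝ) - (i : ℝ) * (1 - t)) ≤ (sensOn true (f v) : ℝ) ∧
        (sensOn true (f v) : ℝ) ≤ C' * (v : ℝ) ^ ((k : ℝ) - (i : ℝ) * (1 - t)) :=
  stmt0_general k i hi1 hik t ht0 ht1
end

section
/- Fix integers k ≥ 2, m > k, and 1 ≤ i < k, let f be the (m,i)-isolated-clique property on v vertices, and let G be a k-uniform hypergraph on Fin v with f(G) = 0. If W is a sensitive tuple for G, then there is exactly one k-element set E of vertices such that flipping E in G makes W a witness. -/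
open Finset

/-- `W` is a witness for the `(m,i)`-isolated-clique property in `G`:
`W` is an `m`-set, every `k`-subset of `W` is an edge, and every edge not inside `W`
meets `W` in fewer than `i` vertices. -/
def IsWitness {v k : ℕ} (m i : ℕ) (G : HGraph v k) (W : Finset (Fin v)) : Prop :=
  W.card = m ∧
  (∀ E : KSet v k, E.1 ⊆ W → G E = true) ∧
  (∀ E : KSet v k, G E = true → ¬ E.1 ⊆ W → (E.1 ∩ W).card < i)

/-- The `(m,i)`-isolated-clique property. -/
noncomputable def isoCliqueProp (v k m i : ℕ) : HGraph v k → Bool :=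
  fun G => @decide (∃ W : Finset (Fin v), IsWitness m i G W) (Classical.propDecidable _)

/-- An `m`-set `W` is a sensitive tuple for `G` if flipping a single `k`-set makes `W`
a witness. -/
def SensitiveTuple {v k : ℕ} (m i : ℕ) (G : HGraph v k) (W : Finset (Fin v)) : Prop :=
  W.card = m ∧ ∃ E : KSet v k, IsWitness m i (Function.update G E (!G E)) W

theorem mem_pi_of_update_mem_pi_of_ne {ι : Type*} {α : ι → Type*} [DecidableEq ι]
    {s : Set ι} {t : ∀ j, Set (α j)} {x : ∀ j, α j} {j j' : ι} {a : α j} {b : α j'}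
    (hne : j ≠ j') (hj : Function.update x j a ∈ s.pi t)
    (hj' : Function.update x j' b ∈ s.pi t) : x ∈ s.pi t := by
  intro l hl
  by_cases hlj : l = j
  · have hlj' : l ≠ j' := hlj ▸ hne
    simpa only [Function.update_of_ne hlj'] using hj' l hl
  · simpa only [Function.update_of_ne hlj] using hj l hl

/-- The values a hypergraph may take at the `k`-set `E` when `W` is an isolated clique in it. The
conditions for different `E` are independent, so the hypergraphs in which a given `W` is a witness
form a subcube of the Boolean cube. -/
def witnessValues {v k : ℕ} (i : ℕ) (W : Finset (Fin v)) (E : KSet v k) : Set Bool :=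
  {b | (E.1 ⊆ W → b = true) ∧ (b = true → ¬ E.1 ⊆ W → (E.1 ∩ W).card < i)}

theorem isWitness_iff_mem_pi {v k m i : ℕ} {G : HGraph v k} {W : Finset (Fin v)} :
    IsWitness m i G W ↔ W.card = m ∧ G ∈ Set.univ.pi (witnessValues i W) := by
  simp only [IsWitness, witnessValues, Set.mem_univ_pi, Set.mem_ofPred_eq, forall_and]

theorem IsWitness.of_update_of_ne {v k m i : ℕ} {G : HGraph v k} {W : Finset (Fin v)}
    {E F : KSet v k} {a b : Bool} (hEF : E ≠ F)
    (hE : IsWitness m i (Function.update G E a) W)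
    (hF : IsWitness m i (Function.update G F b) W) : IsWitness m i G W := by
  rw [isWitness_iff_mem_pi] at hE hF ⊢
  exact ⟨hE.1, mem_pi_of_update_mem_pi_of_ne hEF hE.2 hF.2⟩

theorem isoCliqueProp_eq_false_iff {v k m i : ℕ} {G : HGraph v k} :
    isoCliqueProp v k m i G = false ↔ ∀ W, ¬ IsWitness m i G W := by
  simp only [isoCliqueProp, decide_eq_false_iff_not, not_exists]

theorem stmt1_general {v k m i : ℕ} {G : HGraph v k} {W : Finset (Fin v)}
    (hGW : ¬ IsWitness m i G W) (hW : SensitiveTuple m i G W) :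
    ∃! E : KSet v k, IsWitness m i (Function.update G E (!G E)) W := by
  obtain ⟨-, E, hE⟩ := hW
  refine ⟨E, hE, fun F hF => ?_⟩
  by_contra hFE
  exact hGW (hF.of_update_of_ne hFE hE)

theorem stmt1 (v k m i : ℕ) (hk : 2 ≤ k) (hm : k < m) (hi1 : 1 ≤ i) (hik : i < k)
    (G : HGraph v k) (hG : isoCliqueProp v k m i G = false)
    (W : Finset (Fin v)) (hW : SensitiveTuple m i G W) :
    ∃! E : KSet v k, IsWitness m i (Function.update G E (!G E)) W :=
  stmt1_general (isoCliqueProp_eq_false_iff.mp hG W) hW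
end

section
/- Fix integers k ≥ 2, m ≥ k + 3, and 1 ≤ i < k, let f be the (m,i)-isolated-clique property on v vertices, and let G be a k-uniform hypergraph on Fin v with f(G) = 0. If W₁ and W₂ are distinct sensitive tuples for G, then |W₁ ∩ W₂| < i. -/
open Finset

/-!
Let flipping `E₁` make `W₁` a witness and flipping `E₂` make `W₂` one, and suppose that `W₁` and
`W₂` share at least `i` vertices. A `k`-subset of `W₂` that crosses `W₁` (it leaves `W₁` but meets
it in at least `i` vertices) is an edge unless it is `E₂`, because `W₂` is a clique after the second
flip, and a non-edge unless it is `E₁`, because `W₁` is isolated after the first. As `k < |W₂|`,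
such a set can be chosen to contain a vertex outside `E₁`; it is then `E₂`, so `E₂ ⊄ W₁`. Likewise
some `k`-subset of `W₁` other than `E₁` crosses `W₂`, and it must also be `E₂`, so `E₂ ⊆ W₁`, a
contradiction.
-/

section Crosses

variable {α : Type*} [DecidableEq α] {A B C R S : Finset α} {b y : α} {i k : ℕ}

/-- `S` crosses `A` at level `i` if `S` leaves `A` but meets it in at least `i` points. These are
the edges that the isolation clause of `IsWitness` forbids. -/
def Crosses (i : ℕ) (A S : Finset α) : Prop :=
  ¬ S ⊆ A ∧ i ≤ (S ∩ A).card

lemma Crosses.mono (hC : Crosses i A C) (hCS : C ⊆ S) : Crosses i A S :=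
  ⟨fun hSA => hC.1 (hCS.trans hSA), hC.2.trans (card_le_card (inter_subset_inter_right hCS))⟩

lemma crosses_insert (hy : y ∉ A) (hRA : R ⊆ A) (hR : i ≤ R.card) : Crosses i A (insert y R) :=
  ⟨fun h => hy (h (mem_insert_self y R)),
    hR.trans (card_le_card (subset_inter (subset_insert y R) hRA))⟩

-- If `b ∈ A`, then even for `i = 0` both `b` and a point outside `A` are needed: hence `max i 1`.
lemma exists_crosses_mem_card_le (hBA : ¬ B ⊆ A) (hAB : i ≤ (A ∩ B).card) (hb : b ∈ B) :
    ∃ C ⊆ B, b ∈ C ∧ Crosses i A C ∧ C.card ≤ max i 1 + 1 := by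
  by_cases hbA : b ∈ A
  · obtain ⟨x, hxB, hxA⟩ := not_subset.1 hBA
    have hbAB : b ∈ A ∩ B := mem_inter.2 ⟨hbA, hb⟩
    obtain ⟨R, hbR, hRAB, hR⟩ := exists_subsuperset_card_eq (n := max i 1)
      (singleton_subset_iff.2 hbAB) (le_max_right i 1) (max_le hAB (card_pos.2 ⟨b, hbAB⟩))
    refine ⟨insert x R, insert_subset hxB (hRAB.trans inter_subset_right),
      mem_insert_of_mem (singleton_subset_iff.1 hbR),
      crosses_insert hxA (hRAB.trans inter_subset_left) (hR ▸ le_max_left i 1), ?_⟩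
    exact hR ▸ card_insert_le x R
  · obtain ⟨R, hRAB, hR⟩ := exists_subset_card_eq hAB
    refine ⟨insert b R, insert_subset hb (hRAB.trans inter_subset_right), mem_insert_self b R,
      crosses_insert hbA (hRAB.trans inter_subset_left) hR.ge, ?_⟩
    exact (card_insert_le b R).trans (by omega)

lemma exists_crosses_mem_card_eq (hk : 2 ≤ k) (hik : i < k) (hB : k ≤ B.card) (hBA : ¬ B ⊆ A)
    (hAB : i ≤ (A ∩ B).card) (hb : b ∈ B) :
    ∃ S ⊆ B, b ∈ S ∧ Crosses i A S ∧ S.card = k := by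
  obtain ⟨C, hCB, hbC, hC, hCk⟩ := exists_crosses_mem_card_le hBA hAB hb
  obtain ⟨S, hCS, hSB, hS⟩ := exists_subsuperset_card_eq (n := k) hCB (by omega) hB
  exact ⟨S, hSB, hCS hbC, hC.mono hCS, hS⟩

end Crosses

section IsolatedClique

variable {v k m i : ℕ}

lemma exists_kSet_ne_crosses {A B : Finset (Fin v)} (hk : 2 ≤ k) (hik : i < k) (hB : k < B.card)
    (hBA : ¬ B ⊆ A) (hAB : i ≤ (A ∩ B).card) (E : KSet v k) :
    ∃ S : KSet v k, S ≠ E ∧ S.1 ⊆ B ∧ Crosses i A S.1 := by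
  obtain ⟨b, hbB, hbE⟩ := exists_mem_notMem_of_card_lt_card (E.2.trans_lt hB)
  obtain ⟨S, hSB, hbS, hS, hSk⟩ := exists_crosses_mem_card_eq hk hik hB.le hBA hAB hbB
  exact ⟨⟨S, hSk⟩, ne_of_apply_ne Subtype.val (ne_of_mem_of_not_mem' hbS hbE), hSB, hS⟩

lemma SensitiveTuple.exists_forall_ne {G : HGraph v k} {W : Finset (Fin v)}
    (h : SensitiveTuple m i G W) :
    ∃ E : KSet v k, (∀ S ≠ E, S.1 ⊆ W → G S = true) ∧
      ∀ S ≠ E, Crosses i W S.1 → G S ≠ true := by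
  obtain ⟨-, E, -, hclique, hisolated⟩ := h
  refine ⟨E, fun S hSE hSW => ?_, fun S hSE hS hGS => ?_⟩
  · simpa only [Function.update_of_ne hSE] using hclique S hSW
  · exact (hisolated S (by rwa [Function.update_of_ne hSE]) hS.1).not_ge hS.2

theorem stmt2_general (hk : 2 ≤ k) (hm : k < m) (hik : i < k) (G : HGraph v k)
    (W₁ W₂ : Finset (Fin v)) (h₁ : SensitiveTuple m i G W₁) (h₂ : SensitiveTuple m i G W₂)
    (hne : W₁ ≠ W₂) :
    (W₁ ∩ W₂).card < i := by
  by_contra! hcard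
  have h₁₂ : ¬ W₁ ⊆ W₂ := fun h => hne (eq_of_subset_of_card_le h (h₂.1.trans h₁.1.symm).le)
  have h₂₁ : ¬ W₂ ⊆ W₁ := fun h => hne (eq_of_subset_of_card_le h (h₁.1.trans h₂.1.symm).le).symm
  obtain ⟨E₁, hclique₁, hisolated₁⟩ := h₁.exists_forall_ne
  obtain ⟨E₂, hclique₂, hisolated₂⟩ := h₂.exists_forall_ne
  have hE₂_not_subset : ¬ E₂.1 ⊆ W₁ := by
    obtain ⟨S, hSE₁, hSW₂, hS⟩ := exists_kSet_ne_crosses hk hik (h₂.1 ▸ hm) h₂₁ hcard E₁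
    have hSE₂ : S = E₂ := by_contra fun h => hisolated₁ S hSE₁ hS (hclique₂ S h hSW₂)
    exact hSE₂ ▸ hS.1
  have hE₂_subset : E₂.1 ⊆ W₁ := by
    obtain ⟨T, hTE₁, hTW₁, hT⟩ :=
      exists_kSet_ne_crosses hk hik (h₁.1 ▸ hm) h₁₂ (inter_comm W₁ W₂ ▸ hcard) E₁
    have hTE₂ : T = E₂ := by_contra fun h => hisolated₂ T h hT (hclique₁ T hTE₁ hTW₁)
    exact hTE₂ ▸ hTW₁
  exact hE₂_not_subset hE₂_subset

end IsolatedClique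

theorem stmt2 (v k m i : ℕ) (hk : 2 ≤ k) (hm : k + 3 ≤ m) (hi1 : 1 ≤ i) (hik : i < k)
    (G : HGraph v k) (hG : isoCliqueProp v k m i G = false)
    (W₁ W₂ : Finset (Fin v)) (h₁ : SensitiveTuple m i G W₁) (h₂ : SensitiveTuple m i G W₂)
    (hne : W₁ ≠ W₂) :
    (W₁ ∩ W₂).card < i :=
  stmt2_general hk (by omega) hik G W₁ W₂ h₁ h₂ hne
end

section
/- Let 1 ≤ i ≤ m ≤ v be integers and let F be a family of m-element subsets of Fin v such that any two distinct members of F intersect in fewer than i elements. Then |F| ≤ C(v,i) / C(m,i), where C(a,b) denotes the binomial coefficient. -/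
section PowersetCard

variable {α : Type*} [DecidableEq α]

theorem powersetCard_inter_powersetCard (i : ℕ) (A B : Finset α) :
    A.powersetCard i ∩ B.powersetCard i = (A ∩ B).powersetCard i := by
  ext S
  simp only [Finset.mem_inter, Finset.mem_powersetCard, Finset.subset_inter_iff]
  tauto

theorem disjoint_powersetCard_iff_card_inter_lt {i : ℕ} {A B : Finset α} :
    Disjoint (A.powersetCard i) (B.powersetCard i) ↔ (A ∩ B).card < i := by
  rw [Finset.disjoint_iff_inter_eq_empty, powersetCard_inter_powersetCard,
    Finset.powersetCard_eq_empty]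

end PowersetCard

section Packing

variable {α : Type*} [Fintype α] [DecidableEq α] {F : Finset (Finset α)} {m i : ℕ}

theorem sum_choose_card_le_choose_card
    (hF : (F : Set (Finset α)).Pairwise fun A B => (A ∩ B).card < i) :
    ∑ A ∈ F, A.card.choose i ≤ (Fintype.card α).choose i := by
  have hdisj : (F : Set (Finset α)).PairwiseDisjoint (Finset.powersetCard i) :=
    hF.imp fun _ _ => disjoint_powersetCard_iff_card_inter_lt.mpr
  calc
    ∑ A ∈ F, A.card.choose i = ∑ A ∈ F, (A.powersetCard i).card := by
      simp only [Finset.card_powersetCard]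
    _ = (F.biUnion (Finset.powersetCard i)).card := (Finset.card_biUnion hdisj).symm
    _ ≤ (Finset.univ.powersetCard i).card :=
      Finset.card_le_card <| Finset.biUnion_subset.mpr fun A _ =>
        Finset.powersetCard_mono A.subset_univ
    _ = (Fintype.card α).choose i := by rw [Finset.card_powersetCard, Finset.card_univ]

theorem card_mul_choose_le_choose_card (hm : ∀ A ∈ F, m ≤ A.card)
    (hF : (F : Set (Finset α)).Pairwise fun A B => (A ∩ B).card < i) :
    F.card * m.choose i ≤ (Fintype.card α).choose i :=
  calc
    F.card * m.choose i ≤ ∑ A ∈ F, A.card.choose i :=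
      F.card_nsmul_le_sum _ _ fun A hA => Nat.choose_le_choose i (hm A hA)
    _ ≤ (Fintype.card α).choose i := sum_choose_card_le_choose_card hF

theorem stmt3_general {𝕜 : Type*} [Semifield 𝕜] [LinearOrder 𝕜] [IsStrictOrderedRing 𝕜]
    (him : i ≤ m) (hm : ∀ A ∈ F, m ≤ A.card)
    (hF : (F : Set (Finset α)).Pairwise fun A B => (A ∩ B).card < i) :
    (F.card : 𝕜) ≤ ((Fintype.card α).choose i : 𝕜) / (m.choose i : 𝕜) := by
  have choose_pos : (0 : 𝕜) < m.choose i := mod_cast Nat.choose_pos him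
  rw [le_div_iff₀ choose_pos]
  exact_mod_cast card_mul_choose_le_choose_card hm hF

end Packing

theorem stmt3 (v m i : ℕ) (hi1 : 1 ≤ i) (him : i ≤ m) (hmv : m ≤ v)
    (F : Finset (Finset (Fin v)))
    (hcard : ∀ A ∈ F, A.card = m)
    (hint : ∀ A ∈ F, ∀ B ∈ F, A ≠ B → (A ∩ B).card < i) :
    (F.card : ℝ) ≤ (Nat.choose v i : ℝ) / (Nat.choose m i : ℝ) := by
  simpa only [Fintype.card_fin] using
    stmt3_general (𝕜 := ℝ) him (fun A hA => (hcard A hA).ge) fun A hA B hB => hint A hA B hB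
end

section
/- Let q be a prime power, let d and ℓ be natural numbers with d ≤ q. Then there exists a family of q^{dℓ} subsets S₁, ..., S_{q^{dℓ}} of a set of size q^{ℓ+1} such that |S_j| = q for every j and |S_j ∩ S_{j'}| < d for all j ≠ j'. -/
/-!
Two distinct polynomials of degree less than `d` agree at fewer than `d` points, so the graphs of
two distinct `ℓ`-tuples of such polynomials meet in fewer than `d` points. Over a field with `q`
elements there are `q ^ (d * ℓ)` such tuples, and this count does not change when their graphs are
restricted to `n ≤ q` evaluation points, where they are subsets of size `n` of a set of size
`n * q ^ ℓ`.
-/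

open Finset Polynomial

section Graph

variable {α β : Type*} [Fintype α]

/-- The graph of a function on a finite type, as a finite set; it is `Set.graphOn` over the whole
domain, in a form whose cardinality can be taken by `Finset.card`. -/
def graphFinset (φ : α → β) : Finset (α × β) :=
  univ.map ⟨fun a => (a, φ a), fun _ _ h => congrArg Prod.fst h⟩

theorem card_graphFinset (φ : α → β) : #(graphFinset φ) = Fintype.card α :=
  card_map _

theorem mem_graphFinset {φ : α → β} {y : α × β} : y ∈ graphFinset φ ↔ φ y.1 = y.2 := by
  refine mem_map.trans ⟨?_, fun h => ⟨y.1, mem_univ _, Prod.ext rfl h⟩⟩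
  rintro ⟨a, -, rfl⟩
  rfl

theorem card_graphFinset_inter [DecidableEq α] [DecidableEq β] (φ ψ : α → β) :
    #(graphFinset φ ∩ graphFinset ψ) = #{a | φ a = ψ a} := by
  refine card_nbij' Prod.fst (fun a => (a, φ a)) ?_ ?_ ?_ ?_ <;> intro y hy <;>
    simp_all [mem_graphFinset]

end Graph

section PolynomialTuples

variable {R α ι : Type*}

/-- The map `a ↦ (f₁(v a), ..., f_ℓ(v a))` given by a tuple of polynomials `f` and a family of
evaluation points `v`. The set `S_f` of the construction is its graph when `v` enumerates the
field. -/
def evalTuple [Semiring R] (v : α → R) (f : ι → R[X]) (a : α) : ι → R :=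
  fun i => (f i).eval (v a)

theorem natCard_degreeLT [Semiring R] (d : ℕ) : Nat.card (degreeLT R d) = Nat.card R ^ d := by
  rw [Nat.card_congr (degreeLTEquiv R d).toEquiv, Nat.card_fun, Nat.card_fin]

variable [CommRing R] [IsDomain R] {d : ℕ}

theorem card_filter_eval_eq_lt [DecidableEq R] {s : Finset α} {v : α → R} (hv : Set.InjOn v s)
    {f g : R[X]} (hf : f.degree < d) (hg : g.degree < d) (hfg : f ≠ g) :
    #{a ∈ s | f.eval (v a) = g.eval (v a)} < d := by
  contrapose! hfg with hcard
  have hle : (d : WithBot ℕ) ≤ #{a ∈ s | f.eval (v a) = g.eval (v a)} := mod_cast hcard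
  exact eq_of_degrees_lt_of_eval_index_eq _ (hv.mono (coe_subset.2 (filter_subset _ _)))
    (hf.trans_le hle) (hg.trans_le hle) fun _ ha => (mem_filter.1 ha).2

theorem card_filter_evalTuple_eq_lt [DecidableEq (ι → R)] {s : Finset α} {v : α → R}
    (hv : Set.InjOn v s) {f g : ι → R[X]} (hf : ∀ i, (f i).degree < d)
    (hg : ∀ i, (g i).degree < d) (hfg : f ≠ g) :
    #{a ∈ s | evalTuple v f a = evalTuple v g a} < d := by
  classical
  obtain ⟨i, hi⟩ := Function.ne_iff.1 hfg
  calc #{a ∈ s | evalTuple v f a = evalTuple v g a}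
      ≤ #{a ∈ s | (f i).eval (v a) = (g i).eval (v a)} :=
        card_le_card (monotone_filter_right s fun _ _ h => congrFun h i)
    _ < d := card_filter_eval_eq_lt hv (hf i) (hg i) hi

end PolynomialTuples

theorem exists_field_card_eq {q : ℕ} (hq : IsPrimePow q) :
    ∃ (F : Type) (_ : Field F) (_ : Fintype F), Fintype.card F = q := by
  obtain ⟨inst⟩ := Fintype.nonempty_field_iff.2 ((Fintype.card_fin q).symm ▸ hq)
  exact ⟨Fin q, inst, inferInstance, Fintype.card_fin q⟩

theorem stmt4_general (q n d ℓ : ℕ) (hq : IsPrimePow q) (hn : n ≤ q) :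
    ∃ S : Fin (q ^ (d * ℓ)) → Finset (Fin (n * q ^ ℓ)),
      (∀ j, #(S j) = n) ∧ ∀ j j', j ≠ j' → #(S j ∩ S j') < d := by
  classical
  obtain ⟨F, _, _, hF⟩ := exists_field_card_eq hq
  obtain ⟨v⟩ : Nonempty (Fin n ↪ F) := Function.Embedding.nonempty_of_card_le (by simpa [hF])
  have : Finite (degreeLT F d) := .of_equiv _ (degreeLTEquiv F d).symm.toEquiv
  let points : Fin n × (Fin ℓ → F) ≃ Fin (n * q ^ ℓ) :=
    Fintype.equivFinOfCardEq (by simp [hF])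
  let tuples : (Fin ℓ → degreeLT F d) ≃ Fin (q ^ (d * ℓ)) :=
    Finite.equivFinOfCardEq (by simp [Nat.card_fun, natCard_degreeLT, hF, pow_mul])
  let poly (j : Fin (q ^ (d * ℓ))) (i : Fin ℓ) : F[X] := tuples.symm j i
  have hdeg (j i) : (poly j i).degree < d := mem_degreeLT.1 (tuples.symm j i).2
  have hpoly : poly.Injective := Subtype.val_injective.comp_left.comp tuples.symm.injective
  refine ⟨fun j => (graphFinset (evalTuple v (poly j))).map points.toEmbedding,
    fun j => ?_, fun j j' hj => ?_⟩
  · rw [card_map, card_graphFinset, Fintype.card_fin]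
  · rw [← map_inter, card_map, card_graphFinset_inter]
    exact card_filter_evalTuple_eq_lt v.injective.injOn (hdeg j) (hdeg j') (hpoly.ne hj)

theorem stmt4 (q d ℓ : ℕ) (hq : IsPrimePow q) (hd : d ≤ q) :
    ∃ S : Fin (q ^ (d * ℓ)) → Finset (Fin (q ^ (ℓ + 1))),
      (∀ j, (S j).card = q) ∧
      ∀ j j', j ≠ j' → ((S j) ∩ (S j')).card < d := by
  rw [pow_succ']
  exact stmt4_general q q d ℓ hq le_rfl
end

section
/- For each v, let f_v be the isolated-triangle property on v vertices. Then there exist constants c, C > 0 and v₀ ∈ ℕ such that for all v ≥ v₀: c·v ≤ s(f_v) ≤ C·v and c·v² ≤ bs(f_v) ≤ C·v²; that is, s(f_v) = Θ(v) and bs(f_v) = Θ(v²). -/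
open Finset

/-- `T` is an isolated triangle in the graph `G`: `T` has three vertices, all edges
inside `T` are present, and no edge of `G` joins `T` to a vertex outside `T`. -/
def IsIsolatedTriangle {v : ℕ} (G : HGraph v 2) (T : Finset (Fin v)) : Prop :=
  T.card = 3 ∧
  (∀ E : KSet v 2, E.1 ⊆ T → G E = true) ∧
  (∀ E : KSet v 2, G E = true → ¬ E.1 ⊆ T → E.1 ∩ T = ∅)

/-- The isolated-triangle graph property. -/
noncomputable def isoTriangleProp (v : ℕ) : HGraph v 2 → Bool :=
  fun G => @decide (∃ T : Finset (Fin v), IsIsolatedTriangle G T) (Classical.propDecidable _)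

/-! The pairs meeting an isolated triangle certify its presence, so a graph with such a triangle has
sensitivity at most `3v`. If a graph has none and flipping `E` isolates a triangle `T`, then any
vertex `b ∈ T \ E` determines `T` as its closed neighbourhood, and `T` determines `E`; so the
sensitivity there is at most `v`. It is linear at a graph that consists of a single triangle, which
is spoiled by each pendant edge.

At the empty graph, edge-disjoint triangles are disjoint sensitive blocks, and the `n ^ 2` triples
`{i, n + j, 2n + i + j}` with `i, j < n` pairwise share at most one vertex. -/

section BooleanFunction

variable {I : Type} [DecidableEq I] {f : (I → Bool) → Bool} {x : I → Bool}

/-- `S` is a certificate for `f` at `x`: the values of `x` on `S` force the value of `f`. -/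
def IsCertificate (f : (I → Bool) → Bool) (x : I → Bool) (S : Finset I) : Prop :=
  ∀ y : I → Bool, (∀ i ∈ S, y i = x i) → f y = f x

lemma nonempty_of_flipBlock_ne {B : Finset I} (hB : f (flipBlock x B) ≠ f x) : B.Nonempty := by
  rw [nonempty_iff_ne_empty]
  rintro rfl
  exact hB (congrArg f (funext fun i => if_neg (notMem_empty i)))

variable [Fintype I]

lemma localSens_le_sens (f : (I → Bool) → Bool) (x : I → Bool) : localSens f x ≤ sens f :=
  le_sup (mem_univ x)

lemma sens_eq_max_sensOn (f : (I → Bool) → Bool) :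
    sens f = max (sensOn true f) (sensOn false f) := by
  have hcover : (univ : Finset (I → Bool)) =
      univ.filter (f · = true) ∪ univ.filter (f · = false) := by
    ext x
    simp
  rw [sens, hcover, sup_union, sensOn, sensOn]

lemma IsCertificate.localSens_le_card {S : Finset I} (hS : IsCertificate f x S) :
    localSens f x ≤ S.card := by
  refine card_le_card fun i hi => ?_
  by_contra hiS
  refine (mem_filter.1 hi).2 (hS _ fun j hj => Function.update_of_ne ?_ _ _)
  exact ne_of_mem_of_not_mem hj hiS

section SensitiveBlocks

variable {ι : Type*} [Fintype ι] {B : ι → Finset I}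

lemma card_le_card_of_disjoint_sensitive_blocks (hB : ∀ j, f (flipBlock x (B j)) ≠ f x)
    (hdisj : Pairwise fun j j' => Disjoint (B j) (B j')) : Fintype.card ι ≤ Fintype.card I :=
  (card_le_card_biUnion (hdisj.set_pairwise _) fun j _ => nonempty_of_flipBlock_ne (hB j)).trans
    (card_le_univ _)

lemma card_le_localBlockSens (hB : ∀ j, f (flipBlock x (B j)) ≠ f x)
    (hdisj : Pairwise fun j j' => Disjoint (B j) (B j')) :
    Fintype.card ι ≤ localBlockSens f x := by
  let e := (Fintype.equivFin ι).symm
  refine le_csSup ⟨Fintype.card I, ?_⟩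
    ⟨fun k => B (e k), fun k => hB (e k), fun k k' hkk' => hdisj (e.injective.ne hkk')⟩
  rintro m ⟨B', hB', hdisj'⟩
  simpa using card_le_card_of_disjoint_sensitive_blocks hB' hdisj'

lemma card_le_blockSens (hB : ∀ j, f (flipBlock x (B j)) ≠ f x)
    (hdisj : Pairwise fun j j' => Disjoint (B j) (B j')) : Fintype.card ι ≤ blockSens f :=
  (card_le_localBlockSens hB hdisj).trans (le_sup (mem_univ x))

end SensitiveBlocks

lemma blockSens_le_card (f : (I → Bool) → Bool) : blockSens f ≤ Fintype.card I := by
  refine Finset.sup_le fun x _ => csSup_le' ?_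
  rintro n ⟨B, hB, hdisj⟩
  simpa using card_le_card_of_disjoint_sensitive_blocks hB hdisj

end BooleanFunction

section Hypergraph

variable {v k : ℕ} {T T' : Finset (Fin v)} {E : KSet v k}

/-- The `k`-sets contained in the vertex set `T`. -/
def edgesWithin (k : ℕ) (T : Finset (Fin v)) : Finset (KSet v k) :=
  univ.filter fun E => E.1 ⊆ T

/-- The `k`-sets with at least one vertex in `T`. -/
def edgesMeeting (k : ℕ) (T : Finset (Fin v)) : Finset (KSet v k) :=
  univ.filter fun E => ¬ Disjoint E.1 T

/-- The complete hypergraph on the vertex set `T`, without further edges. -/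
def cliqueOn (k : ℕ) (T : Finset (Fin v)) : HGraph v k :=
  fun E => decide (E ∈ edgesWithin k T)

lemma mem_edgesWithin : E ∈ edgesWithin k T ↔ E.1 ⊆ T := by
  simp [edgesWithin]

lemma mem_edgesMeeting : E ∈ edgesMeeting k T ↔ ¬ Disjoint E.1 T := by
  simp [edgesMeeting]

lemma mem_edgesMeeting_of_mem {a : Fin v} (haE : a ∈ E.1) (haT : a ∈ T) :
    E ∈ edgesMeeting k T :=
  mem_edgesMeeting.2 fun h => disjoint_left.1 h haE haT

lemma edgesWithin_subset_edgesMeeting (hk : k ≠ 0) (T : Finset (Fin v)) :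
    edgesWithin k T ⊆ edgesMeeting k T := by
  intro E hE
  obtain ⟨a, ha⟩ : E.1.Nonempty := card_ne_zero.1 (by rwa [E.2])
  exact mem_edgesMeeting_of_mem ha (mem_edgesWithin.1 hE ha)

lemma flipBlock_false_edgesWithin (k : ℕ) (T : Finset (Fin v)) :
    flipBlock (fun _ => false) (edgesWithin k T) = cliqueOn k T := by
  ext E
  simp [flipBlock, cliqueOn]

lemma disjoint_edgesWithin (h : (T ∩ T').card < k) :
    Disjoint (edgesWithin k T) (edgesWithin k T') := by
  refine disjoint_left.2 fun E hE hE' => h.not_ge ?_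
  rw [← E.2]
  exact card_le_card (subset_inter (mem_edgesWithin.1 hE) (mem_edgesWithin.1 hE'))

end Hypergraph

section Edge

variable {v : ℕ} {a b c : Fin v} {T : Finset (Fin v)} {E : KSet v 2}

/-- The edge joining two distinct vertices. -/
def edge (hab : a ≠ b) : KSet v 2 := ⟨{a, b}, card_pair hab⟩

lemma left_mem_edge (hab : a ≠ b) : a ∈ (edge hab).1 := mem_insert_self a {b}

lemma edge_subset_iff (hab : a ≠ b) : (edge hab).1 ⊆ T ↔ a ∈ T ∧ b ∈ T := by
  simp [edge, insert_subset_iff]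

lemma edge_right_injective {hab : a ≠ b} {hac : a ≠ c} (h : edge hab = edge hac) : b = c := by
  have hb : b ∈ (edge hac).1 := h ▸ mem_insert_of_mem (mem_singleton_self b)
  simpa [edge, hab.symm] using hb

lemma exists_eq_edge_of_mem (ha : a ∈ E.1) : ∃ (b : Fin v) (hab : a ≠ b), E = edge hab := by
  obtain ⟨b, hb⟩ : ∃ b, E.1.erase a = {b} := card_eq_one.1 (by rw [card_erase_of_mem ha, E.2])
  have hba : b ∈ E.1.erase a := hb ▸ mem_singleton_self b
  refine ⟨b, (ne_of_mem_erase hba).symm, Subtype.ext ?_⟩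
  calc E.1 = insert a (E.1.erase a) := (insert_erase ha).symm
    _ = {a, b} := by rw [hb]

lemma card_edgesMeeting_le (T : Finset (Fin v)) : (edgesMeeting 2 T).card ≤ T.card * v := by
  have hprod : (T ×ˢ (univ : Finset (Fin v))).card = T.card * v := by
    rw [card_product, card_univ, Fintype.card_fin]
  rw [← hprod]
  refine card_le_card_of_forall_subsingleton (fun E p => E.1 = {p.1, p.2}) (fun E hE => ?_) ?_
  · obtain ⟨a, haE, haT⟩ := not_disjoint_iff.1 (mem_edgesMeeting.1 hE)
    obtain ⟨b, hab, rfl⟩ := exists_eq_edge_of_mem haE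
    exact ⟨(a, b), mem_product.2 ⟨haT, mem_univ b⟩, rfl⟩
  · rintro p - E ⟨-, hE⟩ E' ⟨-, hE'⟩
    exact Subtype.ext (hE.trans hE'.symm)

lemma card_compl_le_card_edgesMeeting_sdiff_edgesWithin (hT : T.Nonempty) :
    Tᶜ.card ≤ (edgesMeeting 2 T \ edgesWithin 2 T).card := by
  obtain ⟨a, ha⟩ := hT
  refine card_le_card_of_forall_subsingleton
    (fun u E => ∃ hau : a ≠ u, E = edge hau) (fun u hu => ?_) ?_
  · rw [mem_compl] at hu
    have hau : a ≠ u := ne_of_mem_of_not_mem ha hu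
    refine ⟨edge hau, mem_sdiff.2 ⟨mem_edgesMeeting_of_mem (left_mem_edge hau) ha, ?_⟩, hau, rfl⟩
    exact fun hE => hu ((edge_subset_iff hau).1 (mem_edgesWithin.1 hE)).2
  · rintro E - u ⟨-, hau, rfl⟩ w ⟨-, haw, hEw⟩
    exact edge_right_injective hEw

end Edge

section IsolatedTriangle

variable {v : ℕ} {G H : HGraph v 2} {T T' : Finset (Fin v)} {E E' : KSet v 2} {b u : Fin v}

lemma isIsolatedTriangle_iff :
    IsIsolatedTriangle G T ↔
      T.card = 3 ∧ ∀ E ∈ edgesMeeting 2 T, (G E = true ↔ E ∈ edgesWithin 2 T) := by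
  refine and_congr_right fun _ => ⟨?_, fun h => ⟨fun E hE => ?_, fun E hG hE => ?_⟩⟩
  · rintro ⟨hin, hout⟩ E hE
    refine ⟨fun hG => ?_, fun hsub => hin E (mem_edgesWithin.1 hsub)⟩
    by_contra hsub
    refine mem_edgesMeeting.1 hE (disjoint_iff_inter_eq_empty.2 (hout E hG ?_))
    rwa [← mem_edgesWithin]
  · have hwithin := mem_edgesWithin.2 hE
    exact (h E (edgesWithin_subset_edgesMeeting two_ne_zero T hwithin)).2 hwithin
  · rw [← disjoint_iff_inter_eq_empty]
    by_contra hmeet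
    exact hE (mem_edgesWithin.1 ((h E (mem_edgesMeeting.2 hmeet)).1 hG))

lemma isoTriangleProp_eq_true_iff :
    isoTriangleProp v G = true ↔ ∃ T, IsIsolatedTriangle G T := by
  simp [isoTriangleProp]

lemma isoTriangleProp_eq_false_iff :
    isoTriangleProp v G = false ↔ ∀ T, ¬ IsIsolatedTriangle G T := by
  simp [isoTriangleProp]

namespace IsIsolatedTriangle

lemma isoTriangleProp_eq_true (hT : IsIsolatedTriangle G T) : isoTriangleProp v G = true :=
  isoTriangleProp_eq_true_iff.2 ⟨T, hT⟩

lemma eq_true_iff (hT : IsIsolatedTriangle G T) (hE : E ∈ edgesMeeting 2 T) :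
    G E = true ↔ E ∈ edgesWithin 2 T :=
  (isIsolatedTriangle_iff.1 hT).2 E hE

lemma congr (hT : IsIsolatedTriangle G T) (h : ∀ E ∈ edgesMeeting 2 T, H E = G E) :
    IsIsolatedTriangle H T :=
  isIsolatedTriangle_iff.2 ⟨hT.1, fun E hE => by rw [h E hE, hT.eq_true_iff hE]⟩

lemma isCertificate (hT : IsIsolatedTriangle G T) :
    IsCertificate (isoTriangleProp v) G (edgesMeeting 2 T) := fun H hH => by
  rw [hT.isoTriangleProp_eq_true, (hT.congr hH).isoTriangleProp_eq_true]

lemma mem_iff (hT : IsIsolatedTriangle G T) (hb : b ∈ T) (hbu : b ≠ u) :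
    u ∈ T ↔ G (edge hbu) = true := by
  rw [hT.eq_true_iff (mem_edgesMeeting_of_mem (left_mem_edge hbu) hb), mem_edgesWithin,
    edge_subset_iff, and_iff_right hb]

lemma eq_of_common_vertex (hT : IsIsolatedTriangle G T) (hT' : IsIsolatedTriangle H T')
    (hb : b ∈ T) (hb' : b ∈ T') (hGH : ∀ E : KSet v 2, b ∈ E.1 → G E = H E) : T = T' := by
  ext u
  by_cases hbu : b = u
  · subst hbu
    exact iff_of_true hb hb'
  · rw [hT.mem_iff hb hbu, hT'.mem_iff hb' hbu, hGH _ (left_mem_edge hbu)]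

lemma mem_edgesMeeting_of_update {t : Bool} (hG : isoTriangleProp v G = false)
    (hT : IsIsolatedTriangle (Function.update G E t) T) : E ∈ edgesMeeting 2 T := by
  by_contra hE
  refine isoTriangleProp_eq_false_iff.1 hG T (hT.congr fun F hF => ?_)
  exact (Function.update_of_ne (ne_of_mem_of_not_mem hF hE) _ _).symm

lemma eq_of_update_not (hG : isoTriangleProp v G = false)
    (hT : IsIsolatedTriangle (Function.update G E (!G E)) T)
    (hT' : IsIsolatedTriangle (Function.update G E' (!G E')) T) : E = E' := by
  by_contra hne
  have hmeet := hT.mem_edgesMeeting_of_update hG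
  have hflip := (hT.eq_true_iff hmeet).trans (hT'.eq_true_iff hmeet).symm
  simp [hne] at hflip

lemma exists_mem_notMem (hT : IsIsolatedTriangle G T) (E : KSet v 2) : ∃ b ∈ T, b ∉ E.1 :=
  exists_mem_notMem_of_card_lt_card (by rw [E.2, hT.1]; norm_num)

end IsIsolatedTriangle

lemma sensOn_true_isoTriangleProp_le (v : ℕ) : sensOn true (isoTriangleProp v) ≤ 3 * v := by
  refine Finset.sup_le fun G hG => ?_
  obtain ⟨T, hT⟩ := isoTriangleProp_eq_true_iff.1 (mem_filter.1 hG).2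
  calc localSens (isoTriangleProp v) G
      ≤ (edgesMeeting 2 T).card := hT.isCertificate.localSens_le_card
    _ ≤ T.card * v := card_edgesMeeting_le T
    _ = 3 * v := by rw [hT.1]

lemma sensOn_false_isoTriangleProp_le (v : ℕ) : sensOn false (isoTriangleProp v) ≤ v := by
  refine Finset.sup_le fun G hG => ?_
  replace hG : isoTriangleProp v G = false := (mem_filter.1 hG).2
  refine le_of_le_of_eq ?_ (card_fin v)
  refine card_le_card_of_forall_subsingleton
    (fun E b => ∃ T, IsIsolatedTriangle (Function.update G E (!G E)) T ∧ b ∈ T ∧ b ∉ E.1) ?_ ?_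
  · intro E hE
    have hflip : isoTriangleProp v (Function.update G E (!G E)) = true := by
      simpa [hG] using (mem_filter.1 hE).2
    obtain ⟨T, hT⟩ := isoTriangleProp_eq_true_iff.1 hflip
    obtain ⟨b, hbT, hbE⟩ := hT.exists_mem_notMem E
    exact ⟨b, mem_univ b, T, hT, hbT, hbE⟩
  · rintro b - E ⟨-, T, hT, hbT, hbE⟩ E' ⟨-, T', hT', hbT', hbE'⟩
    have hTT' : T = T' := hT.eq_of_common_vertex hT' hbT hbT' fun F hF => by
      rw [Function.update_of_ne (by rintro rfl; exact hbE hF),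
        Function.update_of_ne (by rintro rfl; exact hbE' hF)]
    subst hTT'
    exact hT.eq_of_update_not hG hT'

lemma sens_isoTriangleProp_le (v : ℕ) : sens (isoTriangleProp v) ≤ 3 * v := by
  rw [sens_eq_max_sensOn]
  exact max_le (sensOn_true_isoTriangleProp_le v)
    ((sensOn_false_isoTriangleProp_le v).trans (by omega))

lemma isIsolatedTriangle_cliqueOn (hT : T.card = 3) : IsIsolatedTriangle (cliqueOn 2 T) T :=
  isIsolatedTriangle_iff.2 ⟨hT, fun _ _ => decide_eq_true_iff⟩

lemma isoTriangleProp_const_false (v : ℕ) : isoTriangleProp v (fun _ => false) = false := by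
  refine isoTriangleProp_eq_false_iff.2 fun T hT => ?_
  obtain ⟨E, hET, hE⟩ := exists_subset_card_eq (s := T) (n := 2) (by rw [hT.1]; norm_num)
  exact Bool.false_ne_true (hT.2.1 ⟨E, hE⟩ hET)

lemma IsIsolatedTriangle.subset_of_update_cliqueOn {S : Finset (Fin v)} {t : Bool}
    (hS : IsIsolatedTriangle (Function.update (cliqueOn 2 T) E t) S) : S ⊆ T := by
  intro w hwS
  by_contra hwT
  have eq_edge : ∀ u ∈ S, ∀ hwu : w ≠ u, edge hwu = E := by
    intro u huS hwu
    by_contra hne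
    have hG := (hS.mem_iff hwS hwu).1 huS
    rw [Function.update_of_ne hne, cliqueOn, decide_eq_true_iff, mem_edgesWithin,
      edge_subset_iff] at hG
    exact hwT hG.1
  obtain ⟨a, haS, b, hbS, hab⟩ : ∃ a ∈ S.erase w, ∃ b ∈ S.erase w, a ≠ b :=
    one_lt_card.1 (by rw [card_erase_of_mem hwS, hS.1]; norm_num)
  obtain ⟨haw, haS⟩ := mem_erase.1 haS
  obtain ⟨hbw, hbS⟩ := mem_erase.1 hbS
  exact hab (edge_right_injective ((eq_edge a haS haw.symm).trans (eq_edge b hbS hbw.symm).symm))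

lemma isoTriangleProp_update_cliqueOn (hT : T.card = 3)
    (hE : E ∈ edgesMeeting 2 T \ edgesWithin 2 T) :
    isoTriangleProp v (Function.update (cliqueOn 2 T) E true) = false := by
  obtain ⟨hmeet, hwithin⟩ := mem_sdiff.1 hE
  refine isoTriangleProp_eq_false_iff.2 fun S hS => ?_
  obtain rfl : S = T :=
    eq_of_subset_of_card_le hS.subset_of_update_cliqueOn (by rw [hS.1, hT])
  exact hwithin ((hS.eq_true_iff hmeet).1 (Function.update_self ..))

lemma card_edgesMeeting_sdiff_edgesWithin_le_localSens (hT : T.card = 3) :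
    (edgesMeeting 2 T \ edgesWithin 2 T).card ≤ localSens (isoTriangleProp v) (cliqueOn 2 T) := by
  refine card_le_card fun E hE => mem_filter.2 ⟨mem_univ E, ?_⟩
  have hnot : (!cliqueOn 2 T E) = true := by simp [cliqueOn, (mem_sdiff.1 hE).2]
  rw [hnot, isoTriangleProp_update_cliqueOn hT hE,
    (isIsolatedTriangle_cliqueOn hT).isoTriangleProp_eq_true]
  exact Bool.false_ne_true

lemma sub_three_le_sens_isoTriangleProp (v : ℕ) : v - 3 ≤ sens (isoTriangleProp v) := by
  obtain hv | hv := lt_or_ge v 3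
  · omega
  obtain ⟨T, -, hT⟩ := exists_subset_card_eq (s := (univ : Finset (Fin v))) (n := 3) (by simpa)
  calc v - 3 = Tᶜ.card := by rw [card_compl, hT, Fintype.card_fin]
    _ ≤ (edgesMeeting 2 T \ edgesWithin 2 T).card :=
      card_compl_le_card_edgesMeeting_sdiff_edgesWithin (card_pos.1 (by omega))
    _ ≤ localSens (isoTriangleProp v) (cliqueOn 2 T) :=
      card_edgesMeeting_sdiff_edgesWithin_le_localSens hT
    _ ≤ sens (isoTriangleProp v) := localSens_le_sens _ _

lemma blockSens_isoTriangleProp_le (v : ℕ) : blockSens (isoTriangleProp v) ≤ v ^ 2 :=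
  calc blockSens (isoTriangleProp v)
      ≤ Fintype.card (KSet v 2) := blockSens_le_card _
    _ = v.choose 2 := by rw [Fintype.card_finset_len, Fintype.card_fin]
    _ ≤ v ^ 2 := Nat.choose_le_pow v 2

lemma card_le_blockSens_isoTriangleProp {ι : Type*} [Fintype ι] {T : ι → Finset (Fin v)}
    (hT : ∀ j, (T j).card = 3) (hinter : Pairwise fun j j' => (T j ∩ T j').card ≤ 1) :
    Fintype.card ι ≤ blockSens (isoTriangleProp v) := by
  refine card_le_blockSens (x := fun _ => false) (B := fun j => edgesWithin 2 (T j))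
    (fun j => ?_) fun j j' hjj' => disjoint_edgesWithin (Nat.lt_succ_of_le (hinter hjj'))
  rw [flipBlock_false_edgesWithin, isoTriangleProp_const_false,
    (isIsolatedTriangle_cliqueOn (hT j)).isoTriangleProp_eq_true]
  exact Bool.false_ne_true.symm

end IsolatedTriangle

section TripleSystem

variable {v n : ℕ}

/-- The triples `{i, n + j, 2n + i + j}` indexed by `(i, j)`, a large partial triple system: two
different triples share at most one vertex. -/
def sumTriple (hn : 4 * n ≤ v) (p : Fin n × Fin n) : Finset (Fin v) :=
  {⟨p.1, by omega⟩, ⟨n + p.2, by omega⟩, ⟨2 * n + p.1 + p.2, by omega⟩}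

lemma card_sumTriple (hn : 4 * n ≤ v) (p : Fin n × Fin n) : (sumTriple hn p).card = 3 := by
  refine card_eq_three.2 ⟨_, _, _, ?_, ?_, ?_, rfl⟩ <;> simp only [ne_eq, Fin.mk.injEq] <;> omega

lemma card_sumTriple_inter_le_one (hn : 4 * n ≤ v) :
    Pairwise fun p q => (sumTriple hn p ∩ sumTriple hn q).card ≤ 1 := by
  rintro ⟨i, j⟩ ⟨i', j'⟩ hpq
  refine card_le_one.2 fun a ha b hb => ?_
  simp only [sumTriple, mem_inter, mem_insert, mem_singleton, Fin.ext_iff] at ha hb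
  rw [ne_eq, Prod.mk.injEq, Fin.ext_iff, Fin.ext_iff] at hpq
  -- The entries lie in the disjoint ranges `[0, n)`, `[n, 2n)`, `[2n, 4n)`, and any two of them
  -- determine `i` and `j`.
  omega

lemma sq_le_blockSens_isoTriangleProp (hn : 4 * n ≤ v) :
    n ^ 2 ≤ blockSens (isoTriangleProp v) := by
  simpa [sq] using
    card_le_blockSens_isoTriangleProp (card_sumTriple hn) (card_sumTriple_inter_le_one hn)

end TripleSystem

theorem stmt7 :
    ∃ c C : ℝ, 0 < c ∧ 0 < C ∧ ∃ v₀ : ℕ, ∀ v : ℕ, v₀ ≤ v →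
      c * (v : ℝ) ≤ (sens (isoTriangleProp v) : ℝ) ∧
      (sens (isoTriangleProp v) : ℝ) ≤ C * (v : ℝ) ∧
      c * (v : ℝ) ^ 2 ≤ (blockSens (isoTriangleProp v) : ℝ) ∧
      (blockSens (isoTriangleProp v) : ℝ) ≤ C * (v : ℝ) ^ 2 := by
  refine ⟨1 / 64, 3, by norm_num, by norm_num, 4, fun v hv => ?_⟩
  have sens_lower : v ≤ 64 * sens (isoTriangleProp v) := by
    have := sub_three_le_sens_isoTriangleProp v
    omega
  have sens_upper : sens (isoTriangleProp v) ≤ 3 * v := sens_isoTriangleProp_le v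
  have bs_lower : v ^ 2 ≤ 64 * blockSens (isoTriangleProp v) :=
    calc v ^ 2 ≤ (8 * (v / 4)) ^ 2 := Nat.pow_le_pow_left (by omega) 2
      _ = 64 * (v / 4) ^ 2 := by ring
      _ ≤ 64 * blockSens (isoTriangleProp v) :=
        Nat.mul_le_mul_left 64 (sq_le_blockSens_isoTriangleProp (by omega))
  have bs_upper : blockSens (isoTriangleProp v) ≤ 3 * v ^ 2 :=
    (blockSens_isoTriangleProp_le v).trans (by omega)
  rify at sens_lower sens_upper bs_lower bs_upper
  exact ⟨by linarith, sens_upper, by linarith, bs_upper⟩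
end
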